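/- Let p, q be real numbers and let k be a positive integer such that V_k(p,q)² − 4q^k ≠ 0. Then for every n ≥ 3, s_4(n; p,q; k) = (U_k(p,q)³/(6·(V_k(p,q)² − 4q^k)³)) · (V_k(p,q)³·(n−1)(n−2)(n−3)·U_{n·k}(p,q) − 6q^k·V_k(p,q)²·(n−2)(n−3)(n+1)·U_{(n−1)·k}(p,q) + 12q^(2k)·V_k(p,q)·(n−3)(n²+n−1)·U_{(n−2)·k}(p,q) − 8q^(3k)·n(n²−4)·U_{(n−3)·k}(p,q)). -/

import Mathlib

/-- The generalized Fibonacci sequence: `U 0 = 0`, `U 1 = 1`,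
`U (n+2) = p * U (n+1) - q * U n`. -/
def genU (p q : ℝ) : ℕ → ℝ
  | 0 => 0
  | 1 => 1
  | (n + 2) => p * genU p q (n + 1) - q * genU p q n

/-- The generalized Lucas sequence: `V 0 = 2`, `V 1 = p`,
`V (n+2) = p * V (n+1) - q * V n`. -/
def genV (p q : ℝ) : ℕ → ℝ
  | 0 => 2
  | 1 => p
  | (n + 2) => p * genV p q (n + 1) - q * genV p q n

/-- `s_d(n; p, q; k) = ∑_{j₁ + ⋯ + j_d = n} ∏_{i=1}^{d} U_{k jᵢ}(p, q)`,
the sum being over `d`-tuples of nonnegative integers. -/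
def sgen (p q : ℝ) (k d n : ℕ) : ℝ :=
  ∑ t ∈ Finset.Nat.antidiagonalTuple d n, ∏ i, genU p q (k * t i)

theorem genU_step (p q : ℝ) : ∀ k m : ℕ,
    genU p q (m + 2 * k) + q ^ k * genU p q m = genV p q k * genU p q (m + k)
  | 0, m => by simp [genV]; ring
  | 1, m => by
      have : genU p q (m + 2) = p * genU p q (m + 1) - q * genU p q m := by rw [genU]
      simp [genV, this]
  | (k + 2), m => by
      have h1 := genU_step p q (k + 1) (m + 1)
      have h0 := genU_step p q k (m + 2)
      rw [show m + 1 + 2 * (k + 1) = m + 2 * k + 3 by ring,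
        show m + 1 + (k + 1) = m + k + 2 by ring] at h1
      rw [show m + 2 + 2 * k = m + 2 * k + 2 by ring,
        show m + 2 + k = m + k + 2 by ring] at h0
      rw [show m + 2 * (k + 2) = m + 2 * k + 2 + 2 by ring,
        show m + (k + 2) = m + k + 2 by ring]
      have e1 : genU p q (m + 2 * k + 2 + 2)
          = p * genU p q (m + 2 * k + 3) - q * genU p q (m + 2 * k + 2) := by rw [genU]
      have e2 : genU p q (m + 2) = p * genU p q (m + 1) - q * genU p q m := by rw [genU]
      have e3 : genV p q (k + 2) = p * genV p q (k + 1) - q * genV p q k := by rw [genV]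
      rw [e3, e1]
      rw [e2] at h0
      linear_combination p * h1 - q * h0

theorem genU_rec (p q : ℝ) (k n : ℕ) : genU p q (k * (n + 2)) =
    genV p q k * genU p q (k * (n + 1)) - q ^ k * genU p q (k * n) := by
  have h := genU_step p q k (k * n)
  rw [show k * (n + 2) = k * n + 2 * k by ring, show k * (n + 1) = k * n + k by ring]
  linarith

theorem sgen_succ (p q : ℝ) (k d n : ℕ) : sgen p q k (d + 1) n =
    ∑ x ∈ Finset.HasAntidiagonal.antidiagonal n, genU p q (k * x.1) * sgen p q k d x.2 := by
  unfold sgen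
  rw [Finset.sum_congr rfl (fun x _ => Finset.mul_sum _ _ _), Finset.sum_sigma']
  symm
  refine Finset.sum_bij (fun y _ => Fin.cons y.1.1 y.2) ?_ ?_ ?_ ?_
  · rintro ⟨⟨a, b⟩, t⟩ h
    simp [Finset.Nat.mem_antidiagonalTuple, Fin.sum_univ_succ] at h ⊢
    omega
  · rintro ⟨⟨a, b⟩, t⟩ h ⟨⟨a', b'⟩, t'⟩ h' e
    simp [Finset.Nat.mem_antidiagonalTuple] at h h' e
    obtain ⟨rfl, rfl⟩ := e
    obtain rfl : b = b' := by omega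
    rfl
  · intro t ht
    rw [Finset.Nat.mem_antidiagonalTuple, Fin.sum_univ_succ] at ht
    refine ⟨⟨(t 0, ∑ i, Fin.tail t i), Fin.tail t⟩, ?_, ?_⟩
    · simp [Finset.Nat.mem_antidiagonalTuple, Fin.tail, ht]
    · simp
  · rintro ⟨⟨a, b⟩, t⟩ h
    simp [Fin.prod_univ_succ]

theorem genU_zero (p q : ℝ) : genU p q 0 = 0 := by rw [genU]

theorem sgen_rec (p q : ℝ) (k d n : ℕ) : sgen p q k (d + 1) (n + 2) =
    genV p q k * sgen p q k (d + 1) (n + 1) - q ^ k * sgen p q k (d + 1) n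
      + genU p q k * sgen p q k d (n + 1) := by
  simp only [sgen_succ p q k d, Finset.Nat.sum_antidiagonal_succ, genU_rec, mul_zero, genU_zero,
    zero_mul, zero_add, mul_one, Finset.mul_sum]
  have : ∀ x : ℕ × ℕ, (genV p q k * genU p q (k * (x.1 + 1)) - q ^ k * genU p q (k * x.1)) *
      sgen p q k d x.2 = genV p q k * (genU p q (k * (x.1 + 1)) * sgen p q k d x.2)
        - q ^ k * (genU p q (k * x.1) * sgen p q k d x.2) := fun x => by ring
  simp only [add_assoc, one_add_one_eq_two, genU_rec, this, Finset.sum_sub_distrib]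
  ring

theorem sgen_at_zero (p q : ℝ) (k d : ℕ) : sgen p q k (d + 1) 0 = 0 := by
  simp [sgen_succ, genU_zero]

theorem sgen_at_one (p q : ℝ) (k d : ℕ) : sgen p q k (d + 2) 1 = 0 := by
  rw [sgen_succ, Finset.Nat.sum_antidiagonal_succ]
  simp [genU_zero, sgen_at_zero]

theorem sgen_one (p q : ℝ) (k n : ℕ) : sgen p q k 1 n = genU p q (k * n) := by
  simp [sgen]

theorem sgen_two (p q : ℝ) (k : ℕ) : ∀ n : ℕ,
    (genV p q k ^ 2 - 4 * q ^ k) * sgen p q k 2 n = genU p q k *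
      (2 * n * genU p q (k * (n + 1)) - (n + 1) * genV p q k * genU p q (k * n))
  | 0 => by simp [sgen_at_zero, genU_zero]
  | 1 => by
      have := genU_rec p q k 0
      simp [sgen_at_one, genU_zero] at this ⊢
      rw [one_add_one_eq_two, this]; right; ring
  | (n + 2) => by
      have h0 := sgen_two p q k n
      have h1 := sgen_two p q k (n + 1)
      have r0 := genU_rec p q k n
      have r1 := genU_rec p q k (n + 1)
      have r2 : genU p q (k * (n + 2 + 1)) = _ := r1
      have r3 : genU p q (k * (n + 1 + 1)) = _ := r0
      rw [sgen_rec p q k 1 n, sgen_one]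
      push_cast at *
      rw [r2, r3]
      rw [r3] at h1
      linear_combination genV p q k * h1 - q ^ k * h0

theorem sgen_three (p q : ℝ) (k : ℕ) : ∀ n : ℕ,
    2 * (genV p q k ^ 2 - 4 * q ^ k) ^ 2 * sgen p q k 3 n = genU p q k ^ 2 *
      (((genV p q k ^ 2 - 4 * q ^ k) * (n ^ 2 - 1) + 3 * genV p q k ^ 2 * (n + 1)) *
          genU p q (k * n) - 6 * genV p q k * n * genU p q (k * (n + 1)))
  | 0 => by simp [sgen_at_zero, genU_zero]
  | 1 => by
      have := genU_rec p q k 0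
      simp [sgen_at_one, genU_zero] at this ⊢
      rw [one_add_one_eq_two, this]; right; ring
  | (n + 2) => by
      have h0 := sgen_three p q k n
      have h1 := sgen_three p q k (n + 1)
      have h2 := sgen_two p q k (n + 1)
      have r0 := genU_rec p q k n
      have r1 := genU_rec p q k (n + 1)
      have r2 : genU p q (k * (n + 2 + 1)) = _ := r1
      have r3 : genU p q (k * (n + 1 + 1)) = _ := r0
      rw [sgen_rec p q k 2 n]
      push_cast at *
      rw [r2, r3]
      rw [r3] at h1 h2
      linear_combination genV p q k * h1 - q ^ k * h0
        + 2 * (genV p q k ^ 2 - 4 * q ^ k) * genU p q k * h2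

theorem sgen_four (p q : ℝ) (k : ℕ) : ∀ n : ℕ,
    6 * (genV p q k ^ 2 - 4 * q ^ k) ^ 3 * sgen p q k 4 n = genU p q k ^ 3 *
      (genV p q k ^ 3 * (n - 1) * (n - 2) * (n - 3) * genU p q (k * n)
        - 6 * genV p q k ^ 2 * (n - 2) * (n - 3) * (n + 1) *
          (genV p q k * genU p q (k * n) - genU p q (k * (n + 1)))
        + 12 * genV p q k * (n - 3) * (n ^ 2 + n - 1) *
          ((genV p q k ^ 2 - q ^ k) * genU p q (k * n) - genV p q k * genU p q (k * (n + 1)))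
        - 8 * n * (n ^ 2 - 4) *
          ((genV p q k ^ 3 - 2 * genV p q k * q ^ k) * genU p q (k * n)
            - (genV p q k ^ 2 - q ^ k) * genU p q (k * (n + 1))))
  | 0 => by simp [sgen_at_zero, genU_zero]; right; ring
  | 1 => by
      have := genU_rec p q k 0
      simp [sgen_at_one, genU_zero] at this ⊢
      rw [one_add_one_eq_two, this]; right; ring
  | (n + 2) => by
      have h0 := sgen_four p q k n
      have h1 := sgen_four p q k (n + 1)
      have h2 := sgen_three p q k (n + 1)
      have r0 := genU_rec p q k n
      have r1 := genU_rec p q k (n + 1)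
      have r2 : genU p q (k * (n + 2 + 1)) = _ := r1
      have r3 : genU p q (k * (n + 1 + 1)) = _ := r0
      rw [sgen_rec p q k 3 n]
      push_cast at *
      rw [r2, r3]
      rw [r3] at h1 h2
      linear_combination genV p q k * h1 - q ^ k * h0
        + 3 * (genV p q k ^ 2 - 4 * q ^ k) * genU p q k * h2

/-- The closed form for `s_4(n; p, q; k)`. -/
theorem stmt_7 (p q : ℝ) (k : ℕ) (hk : 1 ≤ k)
    (hV : (genV p q k) ^ 2 - 4 * q ^ k ≠ 0) (n : ℕ) (hn : 3 ≤ n) :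
    sgen p q k 4 n =
      (genU p q k) ^ 3 / (6 * ((genV p q k) ^ 2 - 4 * q ^ k) ^ 3) *
        ((genV p q k) ^ 3 * ((n : ℝ) - 1) * ((n : ℝ) - 2) * ((n : ℝ) - 3) * genU p q (n * k)
          - 6 * q ^ k * (genV p q k) ^ 2 * ((n : ℝ) - 2) * ((n : ℝ) - 3) * ((n : ℝ) + 1) *
              genU p q ((n - 1) * k)
          + 12 * q ^ (2 * k) * genV p q k * ((n : ℝ) - 3) * ((n : ℝ) ^ 2 + (n : ℝ) - 1) *
              genU p q ((n - 2) * k)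
          - 8 * q ^ (3 * k) * (n : ℝ) * ((n : ℝ) ^ 2 - 4) * genU p q ((n - 3) * k)) := by
  have h := sgen_four p q k n
  obtain ⟨m, rfl⟩ : ∃ m, n = m + 3 := ⟨n - 3, by omega⟩
  have r0 := genU_rec p q k m
  have r1 := genU_rec p q k (m + 1)
  have r2 := genU_rec p q k (m + 2)
  have r1' : genU p q (k * (m + 3)) = _ := r1
  have r2' : genU p q (k * (m + 3 + 1)) = _ := r2
  rw [show m + 1 + 1 = m + 2 from rfl, r0] at r1'
  rw [show m + 2 + 1 = m + 3 from rfl, r1', r0] at r2'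
  rw [r2', r1'] at h
  rw [show m + 3 - 1 = m + 2 from rfl, show m + 3 - 2 = m + 1 from rfl,
    show m + 3 - 3 = m from rfl, mul_comm (m + 3) k, mul_comm (m + 2) k, mul_comm (m + 1) k,
    mul_comm m k, r1', r0, mul_comm 2 k, mul_comm 3 k, pow_mul, pow_mul, div_mul_eq_mul_div,
    eq_div_iff (by positivity)]
  linear_combination h
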